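/- Let Λ > 0 and l > 0. Suppose there exist smooth strictly positive functions h, φ : (0, l) → ℝ satisfying h''(s)/h(s) + (φ'(s)/φ(s))·(h'(s)/h(s)) + Λ + φ''(s)/φ(s) ≤ 0 for all s ∈ (0, l). Then l ≤ √(3/2)·π/√Λ. -/

import Mathlib

open MeasureTheory Set Real

/-- A function satisfying the Riccati inequality `w' ≤ -c (1 + w²)` on an open interval forces
the interval to have length at most `π / c`. -/
theorem mul_length_le_pi_of_riccati {w w' : ℝ → ℝ} {a b c : ℝ} (hab : a < b)
    (hw : ∀ s ∈ Ioo a b, HasDerivAt w (w' s) s)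
    (hw' : ∀ s ∈ Ioo a b, w' s ≤ -(c * (1 + w s ^ 2))) :
    c * (b - a) ≤ π := by
  have hG : ∀ s ∈ Ioo a b, HasDerivAt (fun x => arctan (w x) + c * x)
      (1 / (1 + w s ^ 2) * w' s + c * 1) s := fun s hs =>
    (hw s hs).arctan.add ((hasDerivAt_id s).const_mul c)
  have hanti : AntitoneOn (fun x => arctan (w x) + c * x) (Ioo a b) := by
    refine antitoneOn_of_deriv_nonpos (convex_Ioo a b)
      (fun s hs => (hG s hs).continuousAt.continuousWithinAt) ?_ ?_
    · rw [interior_Ioo]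
      exact fun s hs => (hG s hs).differentiableAt.differentiableWithinAt
    · rw [interior_Ioo]
      intro s hs
      rw [(hG s hs).deriv]
      have hpos : 0 < 1 + w s ^ 2 := by positivity
      have hdiv : w' s / (1 + w s ^ 2) ≤ -c := by
        rw [div_le_iff₀ hpos]
        linarith [hw' s hs]
      rw [one_div_mul_eq_div]
      linarith
  by_contra! hlt
  have hc : 0 < c := pos_of_mul_pos_left (pi_pos.trans hlt) (sub_pos.2 hab).le
  obtain ⟨d, hd, hdlt⟩ : ∃ d, π = c * d ∧ d < b - a :=
    ⟨π / c, by field_simp, by rwa [div_lt_iff₀' hc]⟩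
  have hd0 : 0 < d := pos_of_mul_pos_right (hd ▸ pi_pos) hc.le
  set ε := (b - a - d) / 2 with hε
  have hle := hanti (a := a + ε) (b := b - ε) ⟨by linarith, by linarith⟩
    ⟨by linarith, by linarith⟩ (by linarith)
  have hlen : c * (b - ε) - c * (a + ε) = π := by rw [hd, hε]; ring
  dsimp only at hle
  linarith [arctan_lt_pi_div_two (w (a + ε)), neg_pi_div_two_lt_arctan (w (b - ε))]

/-- The logarithmic derivative of a smooth nonvanishing function is differentiable, with
derivative `f'' / f - (f' / f)²`. -/
theorem hasDerivAt_deriv_div_self {f : ℝ → ℝ} {U : Set ℝ} (hU : IsOpen U)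
    (hf : ContDiffOn ℝ 2 f U) {s : ℝ} (hs : s ∈ U) (hfs : f s ≠ 0) :
    HasDerivAt (fun x => deriv f x / f x)
      (deriv (deriv f) s / f s - (deriv f s / f s) ^ 2) s := by
  have h1 : HasDerivAt f (deriv f s) s :=
    ((hf.differentiableOn (by norm_num)).differentiableAt (hU.mem_nhds hs)).hasDerivAt
  have h2 : HasDerivAt (deriv f) (deriv (deriv f) s) s :=
    (((hf.deriv_of_isOpen (m := 1) hU (by norm_num)).differentiableOn
      (by norm_num)).differentiableAt (hU.mem_nhds hs)).hasDerivAt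
  refine (h2.div h1 hfs).congr_deriv ?_
  field_simp

/-- One-dimensional analytic content of Proposition 2.3 (Schoen–Yau type
diameter estimate): if there exist smooth strictly positive `h, φ` on `(0, l)`
with `h''/h + (φ'/φ)(h'/h) + Λ + φ''/φ ≤ 0`, then `l ≤ √(3/2)·π/√Λ`. -/
theorem stmt_6 (Λ l : ℝ) (hΛ : 0 < Λ) (hl : 0 < l)
    (hex : ∃ h φ : ℝ → ℝ,
      ContDiffOn ℝ (⊤ : ℕ∞) h (Set.Ioo 0 l) ∧ ContDiffOn ℝ (⊤ : ℕ∞) φ (Set.Ioo 0 l) ∧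
      (∀ s ∈ Set.Ioo 0 l, 0 < h s) ∧ (∀ s ∈ Set.Ioo 0 l, 0 < φ s) ∧
      (∀ s ∈ Set.Ioo 0 l,
        deriv (deriv h) s / h s + (deriv φ s / φ s) * (deriv h s / h s) + Λ
          + deriv (deriv φ) s / φ s ≤ 0)) :
    l ≤ Real.sqrt (3 / 2) * Real.pi / Real.sqrt Λ := by
  obtain ⟨h, φ, hh, hφ, hpos, φpos, hineq⟩ := hex
  have two_le : (2 : WithTop ℕ∞) ≤ ((⊤ : ℕ∞) : WithTop ℕ∞) :=
    WithTop.coe_le_coe.2 (le_top : (2 : ℕ∞) ≤ ⊤)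
  have hΛ' : 0 < √Λ := sqrt_pos.2 hΛ
  obtain ⟨c, hc, hceq⟩ : ∃ c, 0 < c ∧ c = √Λ / √(3 / 2) := ⟨_, by positivity, rfl⟩
  have hcsq : c ^ 2 = 2 / 3 * Λ := by
    rw [hceq, div_pow, sq_sqrt hΛ.le, sq_sqrt (by norm_num)]
    ring
  have key := mul_length_le_pi_of_riccati (c := c) hl
    (fun s hs => ((hasDerivAt_deriv_div_self isOpen_Ioo (hh.of_le two_le) hs (hpos s hs).ne').add
      (hasDerivAt_deriv_div_self isOpen_Ioo (hφ.of_le two_le) hs (φpos s hs).ne')).const_mul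
        (c / Λ)) (by
    intro s hs
    have hs' := hineq s hs
    simp only [Pi.add_apply]
    generalize deriv (deriv h) s / h s = p at *
    generalize deriv (deriv φ) s / φ s = q at *
    generalize deriv h s / h s = x at *
    generalize deriv φ s / φ s = y at *
    have hrw : -(c * (1 + (c / Λ * (x + y)) ^ 2)) = c / Λ * -(Λ + 2 / 3 * (x + y) ^ 2) := by
      rw [mul_pow, div_pow, hcsq]
      field_simp
    rw [hrw]
    refine mul_le_mul_of_nonneg_left ?_ (by positivity)
    nlinarith [sq_nonneg (x - y), sq_nonneg (x + y)])
  rw [sub_zero, hceq, div_mul_eq_mul_div, div_le_iff₀ (by positivity)] at key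
  rw [le_div_iff₀ hΛ']
  linarith
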